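/- Let L be a Lie derivation of I(X,R) (X locally finite) and x < y. Then L(f)(x,y) = L(f|_x^y)(x,y) for all f ∈ I(X,R), where f|_x^y = Σ_{x≤u≤v≤y} f(u,v) e_{uv}. Moreover, if L is a derivation, the equality also holds when x = y. -/

import Mathlib

open Finset

/-- The standard basis element `e_{xy}` of the incidence algebra:
`e_{xy}(u,v) = 1` if `(u,v) = (x,y)` (and `x ≤ y`), and `0` otherwise. -/
def e (R : Type*) [CommRing R] {X : Type*} [Preorder X] [DecidableEq X]
    [DecidableRel (α := X) (· ≤ ·)] (x y : X) : IncidenceAlgebra R X :=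
  ⟨fun u v => if u = x ∧ v = y ∧ x ≤ y then 1 else 0, fun u v huv => by
    simp only [ite_eq_right_iff, and_imp]
    rintro rfl rfl h
    exact absurd h huv⟩

/-- The restriction `f|_x^y = Σ_{x≤u≤v≤y} f(u,v) e_{uv}`. -/
def restrict (R : Type*) [CommRing R] {X : Type*} [Preorder X] [DecidableEq X]
    [DecidableRel (α := X) (· ≤ ·)] [LocallyFiniteOrder X]
    (f : IncidenceAlgebra R X) (x y : X) : IncidenceAlgebra R X :=
  ∑ u ∈ Finset.Icc x y, ∑ v ∈ Finset.Icc x y, f u v • e R u v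

namespace IncidenceAlgebra

variable {R X : Type*} [CommRing R] [Preorder X]

lemma sum_apply {ι : Type*} (s : Finset ι) (F : ι → IncidenceAlgebra R X) (u v : X) :
    (∑ i ∈ s, F i) u v = ∑ i ∈ s, F i u v := by
  classical
  induction s using Finset.induction_on with
  | empty => rfl
  | insert i s hi ih => rw [sum_insert hi, sum_insert hi, add_apply, ih]

variable [LocallyFiniteOrder X]

/-- `g` vanishes on the interval `[x, y]`. For fixed `x` and `y` such elements form a two-sided
ideal of the incidence algebra. -/
def VanishesOn (g : IncidenceAlgebra R X) (x y : X) : Prop :=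
  ∀ u ∈ Icc x y, ∀ v ∈ Icc x y, g u v = 0

namespace VanishesOn

variable {g h : IncidenceAlgebra R X} {x y : X}

lemma sub (hg : VanishesOn g x y) (hh : VanishesOn h x y) : VanishesOn (g - h) x y :=
  fun u hu v hv => by simp [sub_apply, hg u hu v hv, hh u hu v hv]

lemma mul_left (a : IncidenceAlgebra R X) (hg : VanishesOn g x y) : VanishesOn (a * g) x y :=
  fun u hu v hv => by
    rw [mul_apply]
    refine sum_eq_zero fun w hw => ?_
    rw [mem_Icc] at hu hv hw
    rw [hg w (mem_Icc.2 ⟨hu.1.trans hw.1, hw.2.trans hv.2⟩) v (mem_Icc.2 hv), mul_zero]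

lemma mul_right (a : IncidenceAlgebra R X) (hg : VanishesOn g x y) : VanishesOn (g * a) x y :=
  fun u hu v hv => by
    rw [mul_apply]
    refine sum_eq_zero fun w hw => ?_
    rw [mem_Icc] at hu hv hw
    rw [hg u (mem_Icc.2 hu) w (mem_Icc.2 ⟨hu.1.trans hw.1, hw.2.trans hv.2⟩), zero_mul]

lemma commutator_left (a : IncidenceAlgebra R X) (hg : VanishesOn g x y) :
    VanishesOn (a * g - g * a) x y :=
  (hg.mul_left a).sub (hg.mul_right a)

lemma commutator_right (a : IncidenceAlgebra R X) (hg : VanishesOn g x y) :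
    VanishesOn (g * a - a * g) x y :=
  (hg.mul_right a).sub (hg.mul_left a)

lemma apply_eq_zero (hg : VanishesOn g x y) (hxy : x ≤ y) : g x y = 0 :=
  hg x (left_mem_Icc.2 hxy) y (right_mem_Icc.2 hxy)

lemma apply_swap_eq_zero (hg : VanishesOn g x y) (hxy : x ≤ y) : g y x = 0 :=
  hg y (right_mem_Icc.2 hxy) x (left_mem_Icc.2 hxy)

end VanishesOn

variable [DecidableEq X] [DecidableRel (α := X) (· ≤ ·)]

lemma e_self_mul_apply (h : IncidenceAlgebra R X) (x u v : X) :
    (e R x x * h) u v = if u = x then h u v else 0 := by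
  have he : ∀ w, e R x x u w = if u = x ∧ w = x ∧ x ≤ x then 1 else 0 := fun _ => rfl
  by_cases hu : u = x
  · subst hu
    by_cases huv : u ≤ v
    · simp [mul_apply, he, huv]
    · simp [apply_eq_zero_of_not_le huv]
  · simp [mul_apply, he, hu]

lemma mul_e_self_apply (h : IncidenceAlgebra R X) (y u v : X) :
    (h * e R y y) u v = if v = y then h u v else 0 := by
  have he : ∀ w, e R y y w v = if w = y ∧ v = y ∧ y ≤ y then 1 else 0 := fun _ => rfl
  by_cases hv : v = y
  · subst hv
    by_cases huv : u ≤ v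
    · simp [mul_apply, he, huv]
    · simp [apply_eq_zero_of_not_le huv]
  · simp [mul_apply, he, hv]

lemma e_mul_mul_e_apply (h : IncidenceAlgebra R X) (x y u v : X) :
    (e R x x * h * e R y y) u v = if u = x ∧ v = y then h u v else 0 := by
  simp only [mul_e_self_apply, e_self_mul_apply, ← ite_and, and_comm]

lemma restrict_apply (f : IncidenceAlgebra R X) {x y u v : X} (hu : u ∈ Icc x y)
    (hv : v ∈ Icc x y) : restrict R f x y u v = f u v := by
  have he : ∀ a b, e R a b u v = if u = a ∧ v = b ∧ a ≤ b then 1 else 0 := fun _ _ => rfl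
  simp only [_root_.restrict, sum_apply, constSMul_apply, he]
  rw [sum_eq_single_of_mem u hu fun a _ ha => sum_eq_zero fun b _ => by simp [ha.symm],
    sum_eq_single_of_mem v hv fun b _ hb => by simp [hb.symm]]
  by_cases huv : u ≤ v
  · simp [huv]
  · simp [apply_eq_zero_of_not_le huv]

lemma vanishesOn_sub_restrict (f : IncidenceAlgebra R X) (x y : X) :
    VanishesOn (f - restrict R f x y) x y :=
  fun u hu v hv => by rw [sub_apply, restrict_apply f hu hv, sub_self]

lemma commutator_e_apply (h : IncidenceAlgebra R X) {x y : X} (hne : x ≠ y) (u v : X) :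
    (e R x x * (h * e R y y - e R y y * h) - (h * e R y y - e R y y * h) * e R x x) u v =
      (if u = x ∧ v = y then h u v else 0) + if u = y ∧ v = x then h u v else 0 := by
  simp only [sub_apply, e_self_mul_apply, mul_e_self_apply]
  split_ifs <;> simp_all

/-- A Lie derivation maps elements vanishing on `[x, y]` to elements vanishing at `(x, y)`,
provided `x ≠ y`. -/
lemma VanishesOn.lieDer_apply_eq_zero {L : IncidenceAlgebra R X →ₗ[R] IncidenceAlgebra R X}
    (hL : ∀ f g : IncidenceAlgebra R X,
      L (f * g - g * f) = (L f * g - g * L f) + (f * L g - L g * f))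
    {g : IncidenceAlgebra R X} {x y : X} (hg : VanishesOn g x y) (hxy : x ≤ y) (hne : x ≠ y) :
    L g x y = 0 := by
  have hzero : e R x x * (g * e R y y - e R y y * g) - (g * e R y y - e R y y * g) * e R x x
      = 0 := by
    ext u v -
    rw [commutator_e_apply g hne, zero_apply]
    split_ifs with h₁ h₂ h₂ <;> simp_all [hg.apply_eq_zero hxy, hg.apply_swap_eq_zero hxy]
  have key := hL (e R x x) (g * e R y y - e R y y * g)
  have hsplit : ∀ a b c : IncidenceAlgebra R X,
      a * (b + c) - (b + c) * a = (a * b - b * a) + (a * c - c * a) := fun a b c => by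
    noncomm_ring
  rw [hzero, map_zero, hL g, hsplit] at key
  have hval := congrArg (fun h : IncidenceAlgebra R X => h x y) key
  simp only [zero_apply, add_apply, commutator_e_apply _ hne] at hval
  rw [((hg.commutator_right _).commutator_left _).apply_eq_zero hxy,
    ((hg.commutator_right _).commutator_left _).apply_eq_zero hxy] at hval
  simpa [hne] using hval.symm

/-- A derivation maps elements vanishing on `[x, y]` to elements vanishing at `(x, y)`. -/
lemma VanishesOn.derivation_apply_eq_zero
    {L : IncidenceAlgebra R X →ₗ[R] IncidenceAlgebra R X}
    (hL : ∀ f g : IncidenceAlgebra R X, L (f * g) = L f * g + f * L g)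
    {g : IncidenceAlgebra R X} {x y : X} (hg : VanishesOn g x y) (hxy : x ≤ y) :
    L g x y = 0 := by
  have hzero : e R x x * g * e R y y = 0 := by
    ext u v -
    rw [e_mul_mul_e_apply, zero_apply]
    split_ifs with h
    · rw [h.1, h.2, hg.apply_eq_zero hxy]
    · rfl
  have key := hL (e R x x * g) (e R y y)
  rw [hzero, map_zero, hL, add_mul] at key
  have hval := congrArg (fun h : IncidenceAlgebra R X => h x y) key
  simp only [zero_apply, add_apply, e_mul_mul_e_apply] at hval
  rw [((hg.mul_left _).mul_right _).apply_eq_zero hxy,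
    ((hg.mul_left _).mul_right _).apply_eq_zero hxy] at hval
  simpa using hval.symm

end IncidenceAlgebra

/-- Let `L` be a Lie derivation of `I(X,R)` (`X` locally finite) and `x < y`. Then
`L(f)(x,y) = L(f|_x^y)(x,y)` for all `f ∈ I(X,R)`. Moreover, if `L` is a derivation, the
equality also holds when `x = y`. -/
theorem lieDer_apply_eq_restrict {R X : Type*} [CommRing R] [Preorder X]
    [DecidableEq X] [DecidableRel (α := X) (· ≤ ·)] [LocallyFiniteOrder X]
    (L : IncidenceAlgebra R X →ₗ[R] IncidenceAlgebra R X)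
    (hL : ∀ f g : IncidenceAlgebra R X,
      L (f * g - g * f) = (L f * g - g * L f) + (f * L g - L g * f)) :
    (∀ (f : IncidenceAlgebra R X) (x y : X), x ≤ y → x ≠ y →
        L f x y = L (restrict R f x y) x y) ∧
    ((∀ f g : IncidenceAlgebra R X, L (f * g) = L f * g + f * L g) →
      ∀ (f : IncidenceAlgebra R X) (x : X), L f x x = L (restrict R f x x) x x) := by
  refine ⟨fun f x y hxy hne => ?_, fun hD f x => ?_⟩
  · have h := (IncidenceAlgebra.vanishesOn_sub_restrict f x y).lieDer_apply_eq_zero hL hxy hne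
    rwa [map_sub, IncidenceAlgebra.sub_apply, sub_eq_zero] at h
  · have h := (IncidenceAlgebra.vanishesOn_sub_restrict f x x).derivation_apply_eq_zero hD le_rfl
    rwa [map_sub, IncidenceAlgebra.sub_apply, sub_eq_zero] at h
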